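/- Let S ⊆ [n]² be admissible, Ā ∈ M_S and b̄ ∈ ℝⁿ with ‖Ā‖_max ≤ 1 and ‖b̄‖_∞ ≤ 1, σ > 0, and let A ~ N_S(Ā, σ²Id) and b ~ N(b̄, σ²Id) be independent. Then for every real t > 2|S|, Prob{ c(A,b) > t } ≤ ((1 + σ)/σ)·(4n|S|²/(t − 2|S|))·√(2/π), where c(A,b) = max_{k ∈ [n]} c_k(A,b) and c_k(A,b) is the componentwise condition number of the map (A,b) ↦ (A⁻¹b)_k at (A,b) (A is almost surely invertible). -/

import Mathlib

open MeasureTheory ProbabilityTheory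
open scoped ENNReal

/-- Componentwise "distance" `d(u,v) = ‖(u−v)/v‖_∞`, valued in `[0,∞]`:
the `i`-th component of the quotient is `|u i − v i|/|v i|` if `v i ≠ 0`,
`0` if `u i = v i = 0`, and `∞` otherwise. -/
noncomputable def cwDist {ι : Type*} (u v : ι → ℝ) : ℝ≥0∞ :=
  ⨆ i, if v i ≠ 0 then ENNReal.ofReal (|u i - v i| / |v i|)
       else if u i = v i then 0 else ⊤

/-- Componentwise condition number of `F : D ⊆ ℝ^ι → ℝ^κ` at `a`:
`c^F(a) = lim_{δ→0} sup { d(F x, F a)/d(x,a) : x ∈ D, d(x,a) ≤ δ, x ≠ a }`,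
the limit being an infimum since the sup is monotone in `δ`. -/
noncomputable def cwCond {ι κ : Type*} (D : Set (ι → ℝ)) (F : (ι → ℝ) → κ → ℝ)
    (a : ι → ℝ) : ℝ≥0∞ :=
  ⨅ δ ∈ Set.Ioi (0 : ℝ≥0∞),
    ⨆ x ∈ {x ∈ D | cwDist x a ≤ δ ∧ x ≠ a}, cwDist (F x) (F a) / cwDist x a

/-- A matrix viewed as a point of `ℝ^(n×n)`. -/
def matToFun {n : ℕ} (A : Matrix (Fin n) (Fin n) ℝ) : Fin n × Fin n → ℝ :=
  fun p => A p.1 p.2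

/-- A point of `ℝ^(n×n)` viewed as a matrix. -/
def funToMat {n : ℕ} (x : Fin n × Fin n → ℝ) : Matrix (Fin n) (Fin n) ℝ :=
  Matrix.of fun i j => x (i, j)

/-- The componentwise condition number `c^det(A)` of determinant computation at `A`. -/
noncomputable def cDet {n : ℕ} (A : Matrix (Fin n) (Fin n) ℝ) : ℝ≥0∞ :=
  cwCond Set.univ (fun x (_ : Unit) => (funToMat x).det) (matToFun A)

/-- The componentwise condition number `c†_{kl}(A)` of the map `A ↦ (A⁻¹)_{kl}` at `A`. -/
noncomputable def cInv {n : ℕ} (k l : Fin n) (A : Matrix (Fin n) (Fin n) ℝ) : ℝ≥0∞ :=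
  cwCond {x | IsUnit (funToMat x).det}
    (fun x (_ : Unit) => (funToMat x)⁻¹ k l) (matToFun A)

/-- `c†(A) = max_{k,l} c†_{kl}(A)`. -/
noncomputable def cInvMax {n : ℕ} (A : Matrix (Fin n) (Fin n) ℝ) : ℝ≥0∞ :=
  ⨆ k, ⨆ l, cInv k l A

/-- A pair (matrix, right-hand side) viewed as a point of `ℝ^(n×n+n)`. -/
def pairToFun {n : ℕ} (A : Matrix (Fin n) (Fin n) ℝ) (b : Fin n → ℝ) :
    (Fin n × Fin n) ⊕ Fin n → ℝ :=
  Sum.elim (fun p => A p.1 p.2) b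

def funToMat' {n : ℕ} (x : (Fin n × Fin n) ⊕ Fin n → ℝ) : Matrix (Fin n) (Fin n) ℝ :=
  Matrix.of fun i j => x (Sum.inl (i, j))

def funToVec {n : ℕ} (x : (Fin n × Fin n) ⊕ Fin n → ℝ) : Fin n → ℝ :=
  fun i => x (Sum.inr i)

/-- The componentwise condition number `c_k(A,b)` of the map `(A,b) ↦ (A⁻¹b)_k` at `(A,b)`. -/
noncomputable def cLin {n : ℕ} (k : Fin n) (A : Matrix (Fin n) (Fin n) ℝ)
    (b : Fin n → ℝ) : ℝ≥0∞ :=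
  cwCond {x | IsUnit (funToMat' x).det}
    (fun x (_ : Unit) => (Matrix.mulVec (funToMat' x)⁻¹ (funToVec x)) k) (pairToFun A b)

/-- `c(A,b) = max_k c_k(A,b)`. -/
noncomputable def cLinMax {n : ℕ} (A : Matrix (Fin n) (Fin n) ℝ) (b : Fin n → ℝ) : ℝ≥0∞ :=
  ⨆ k, cLin k A b

instance matrixMeasurableSpace {n : ℕ} : MeasurableSpace (Matrix (Fin n) (Fin n) ℝ) :=
  inferInstanceAs (MeasurableSpace (Fin n → Fin n → ℝ))

/-- The distribution `N_S(Ā, σ²Id)` of a random sparse matrix: the entries `a_{ij}` with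
`(i,j) ∈ S` are independent Gaussians `N(ā_{ij}, σ²)`, and `a_{ij} = 0` for `(i,j) ∉ S`. -/
noncomputable def sparseGaussian {n : ℕ} (S : Finset (Fin n × Fin n))
    (Abar : Matrix (Fin n) (Fin n) ℝ) (σ : ℝ) : Measure (Matrix (Fin n) (Fin n) ℝ) :=
  (Measure.pi fun p : S => gaussianReal (Abar p.1.1 p.1.2) ⟨σ ^ 2, sq_nonneg σ⟩).map
    fun g => Matrix.of fun i j => if h : (i, j) ∈ S then g ⟨(i, j), h⟩ else 0

/-- The distribution `N(b̄, σ²Id)` on `ℝⁿ`: independent Gaussian entries `N(b̄_i, σ²)`. -/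
noncomputable def vecGaussian {n : ℕ} (bbar : Fin n → ℝ) (σ : ℝ) : Measure (Fin n → ℝ) :=
  Measure.pi fun i => gaussianReal (bbar i) ⟨σ ^ 2, sq_nonneg σ⟩

/-- `S ⊆ [n]²` is admissible when `M_S` contains an invertible matrix. -/
def Admissible {n : ℕ} (S : Finset (Fin n × Fin n)) : Prop :=
  ∃ B : Matrix (Fin n) (Fin n) ℝ, (∀ i j, (i, j) ∉ S → B i j = 0) ∧ IsUnit B.det

/-!
The relative sensitivity of `det A` to `a i j` is `|a i j * A⁻¹ j i|`. By Cramer's rule, `c_k(A,b)`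
is at most twice the sum of the sensitivities of `det A` and of the determinant of `A` with column
`k` replaced by `b`. Both determinants are affine in each entry, so as a function of `y = a i j`
alone such a sensitivity is `|y / (y - w)|`, where `w` depends on the other entries. It exceeds `s`
only on an interval around a multiple of `w` of length proportional to `|w| / (s - 1)`, where `|y|`
is of order `|w|`. As `|y|` times the Gaussian density is bounded, this has probability
`O(1 / (s - 1))` uniformly in `w`; a union bound over the `n|S|` sensitivities concludes.
-/

open Function Matrix Real
open scoped NNReal

section CondComponentwise

variable {ι κ : Type*}

lemma cwDist_le_ofReal {u v : ι → ℝ} {r : ℝ} (h : ∀ i, |u i - v i| ≤ r * |v i|) :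
    cwDist u v ≤ ENNReal.ofReal r := by
  refine iSup_le fun i => ?_
  split_ifs with hv hu
  · exact ENNReal.ofReal_le_ofReal ((div_le_iff₀ (abs_pos.2 hv)).2 (h i))
  · exact zero_le
  · have hui := h i
    rw [not_ne_iff.1 hv] at hui hu
    exact absurd (by simpa using hui) hu

lemma abs_sub_le_toReal_cwDist_mul {u v : ι → ℝ} (h : cwDist u v ≠ ⊤) (i : ι) :
    |u i - v i| ≤ (cwDist u v).toReal * |v i| := by
  have hi : _ ≤ cwDist u v := le_iSup (fun i => if v i ≠ 0 then
    ENNReal.ofReal (|u i - v i| / |v i|) else if u i = v i then 0 else ⊤) i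
  split_ifs at hi with hv hu
  · exact (div_le_iff₀ (abs_pos.2 hv)).1 ((ENNReal.ofReal_le_iff_le_toReal h).1 hi)
  · simp only [hu, sub_self, abs_zero]
    positivity
  · exact absurd (top_le_iff.1 hi) h

lemma exists_forall_cwDist_le_dist_lt [Fintype ι] (a : ι → ℝ) {ρ : ℝ} (hρ : 0 < ρ) :
    ∃ δ > 0, ∀ x, cwDist x a ≤ ENNReal.ofReal δ → dist x a < ρ := by
  refine ⟨ρ / (‖a‖ + 1), by positivity, fun x hx => ?_⟩
  refine (dist_pi_lt_iff hρ).2 fun i => ?_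
  calc |x i - a i| ≤ (cwDist x a).toReal * |a i| :=
        abs_sub_le_toReal_cwDist_mul (ne_top_of_le_ne_top ENNReal.ofReal_ne_top hx) i
    _ ≤ ρ / (‖a‖ + 1) * ‖a‖ := by
        gcongr
        · exact ENNReal.toReal_le_of_le_ofReal (by positivity) hx
        · exact norm_le_pi_norm a i
    _ < ρ := by
        rw [div_mul_eq_mul_div, div_lt_iff₀ (by positivity)]
        linarith

lemma cwCond_le_ofReal_of_continuousAt [Finite ι] {D : Set (ι → ℝ)} {F : (ι → ℝ) → κ → ℝ}
    {a : ι → ℝ} {G : (ι → ℝ) → ℝ} (hG : ContinuousAt G a)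
    (hF : ∀ x ∈ D, ∀ d, 0 ≤ d → (∀ i, |x i - a i| ≤ d * |a i|) →
      ∀ k, |F x k - F a k| ≤ G x * d * |F a k|) :
    cwCond D F a ≤ ENNReal.ofReal (G a) := by
  cases nonempty_fintype ι
  refine le_of_forall_gt_imp_ge_of_dense fun c hc => ?_
  obtain ⟨ρ, hρ, hGc⟩ := Metric.eventually_nhds_iff.1
    ((ENNReal.continuous_ofReal.continuousAt.comp hG).eventually_lt_const hc)
  obtain ⟨δ, hδ, hdist⟩ := exists_forall_cwDist_le_dist_lt a hρ
  refine (iInf₂_le (ENNReal.ofReal δ) (ENNReal.ofReal_pos.2 hδ)).trans (iSup₂_le ?_)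
  rintro x ⟨hxD, hxδ, -⟩
  have hfin : cwDist x a ≠ ⊤ := ne_top_of_le_ne_top ENNReal.ofReal_ne_top hxδ
  refine ENNReal.div_le_of_le_mul ?_
  calc cwDist (F x) (F a) ≤ ENNReal.ofReal (G x * (cwDist x a).toReal) :=
        cwDist_le_ofReal (hF x hxD _ ENNReal.toReal_nonneg (abs_sub_le_toReal_cwDist_mul hfin))
    _ = ENNReal.ofReal (G x) * cwDist x a := by
        rw [ENNReal.ofReal_mul' ENNReal.toReal_nonneg, ENNReal.ofReal_toReal hfin]
    _ ≤ c * cwDist x a := by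
        gcongr
        exact (hGc (hdist x hxδ)).le

end CondComponentwise

section LinearSystem

variable {ι : Type*} [Fintype ι] [DecidableEq ι]

lemma inv_mulVec_sub_inv_mulVec {R : Type*} [CommRing R] {A A' : Matrix ι ι R} (b b' : ι → R)
    (hA : IsUnit A.det) (hA' : IsUnit A'.det) :
    A'⁻¹ *ᵥ b' - A⁻¹ *ᵥ b = A⁻¹ *ᵥ ((b' - b) - (A' - A) *ᵥ (A'⁻¹ *ᵥ b')) := by
  have hb' : A' *ᵥ (A'⁻¹ *ᵥ b') = b' := by
    rw [mulVec_mulVec, mul_nonsing_inv _ hA', one_mulVec]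
  have hx' : A⁻¹ *ᵥ (A *ᵥ (A'⁻¹ *ᵥ b')) = A'⁻¹ *ᵥ b' := by
    rw [mulVec_mulVec, nonsing_inv_mul _ hA, one_mulVec]
  rw [sub_mulVec, hb', mulVec_sub, mulVec_sub, mulVec_sub, hx']
  abel

lemma abs_inv_mulVec_sub_le {A A' : Matrix ι ι ℝ} {b b' : ι → ℝ} {d : ℝ}
    (hA : IsUnit A.det) (hA' : IsUnit A'.det) (hAA' : ∀ i j, |A' i j - A i j| ≤ d * |A i j|)
    (hbb' : ∀ i, |b' i - b i| ≤ d * |b i|) (k : ι) :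
    |(A'⁻¹ *ᵥ b') k - (A⁻¹ *ᵥ b) k| ≤
      (∑ i, |A⁻¹ k i| * (|b i| + ∑ j, |A i j| * |(A'⁻¹ *ᵥ b') j|)) * d := by
  rw [← Pi.sub_apply, inv_mulVec_sub_inv_mulVec b b' hA hA', Finset.sum_mul]
  set x' := A'⁻¹ *ᵥ b'
  have hres (i : ι) : |((b' - b) - (A' - A) *ᵥ x') i| ≤ (|b i| + ∑ j, |A i j| * |x' j|) * d :=
    calc |((b' - b) - (A' - A) *ᵥ x') i| ≤ |b' i - b i| + |∑ j, (A' i j - A i j) * x' j| :=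
          abs_sub _ _
      _ ≤ d * |b i| + ∑ j, d * |A i j| * |x' j| := by
          gcongr
          · exact hbb' i
          · refine (Finset.abs_sum_le_sum_abs _ _).trans (Finset.sum_le_sum fun j _ => ?_)
            rw [abs_mul]
            gcongr
            exact hAA' i j
      _ = (|b i| + ∑ j, |A i j| * |x' j|) * d := by
          simp only [add_mul, Finset.sum_mul, mul_comm d, mul_right_comm _ d]
  refine (Finset.abs_sum_le_sum_abs _ _).trans (Finset.sum_le_sum fun i _ => ?_)
  rw [abs_mul, mul_assoc]
  gcongr
  exact hres i

lemma abs_le_sum_abs_mul_abs_inv_mulVec {A : Matrix ι ι ℝ} (b : ι → ℝ) (hA : IsUnit A.det)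
    (i : ι) : |b i| ≤ ∑ j, |A i j| * |(A⁻¹ *ᵥ b) j| := by
  have hb : A *ᵥ (A⁻¹ *ᵥ b) = b := by rw [mulVec_mulVec, mul_nonsing_inv _ hA, one_mulVec]
  calc |b i| = |∑ j, A i j * (A⁻¹ *ᵥ b) j| := congrArg abs (congrFun hb i).symm
    _ ≤ ∑ j, |A i j| * |(A⁻¹ *ᵥ b) j| := by
        simpa only [abs_mul] using Finset.abs_sum_le_sum_abs (fun j => A i j * (A⁻¹ *ᵥ b) j) _

end LinearSystem

lemma continuousAt_inv_mulVec {n : ℕ} {x : (Fin n × Fin n) ⊕ Fin n → ℝ}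
    (hx : IsUnit (funToMat' x).det) :
    ContinuousAt (fun y => (funToMat' y)⁻¹ *ᵥ funToVec y) x := by
  have hmat : Continuous (funToMat' (n := n)) :=
    continuous_matrix fun i j => continuous_apply (Sum.inl (i, j))
  have hvec : Continuous (funToVec (n := n)) := continuous_pi fun i => continuous_apply _
  have hinv : ContinuousAt (fun y => (funToMat' y)⁻¹) x :=
    (continuousAt_matrix_inv _ (by
      simpa [Ring.inverse_eq_inv'] using continuousAt_inv₀ hx.ne_zero)).comp hmat.continuousAt
  exact (continuous_fst.matrix_mulVec continuous_snd).continuousAt.comp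
    (hinv.prodMk hvec.continuousAt)

lemma cLin_le_two_mul_sum_div {n : ℕ} (k : Fin n) {A : Matrix (Fin n) (Fin n) ℝ} {b : Fin n → ℝ}
    (hA : IsUnit A.det) (hk : (A⁻¹ *ᵥ b) k ≠ 0) :
    cLin k A b ≤
      ENNReal.ofReal (2 * (∑ i, ∑ j, |A⁻¹ k i| * |A i j| * |(A⁻¹ *ᵥ b) j|) / |(A⁻¹ *ᵥ b) k|) := by
  let G (x : Fin n → ℝ) : ℝ :=
    (∑ i, |A⁻¹ k i| * (|b i| + ∑ j, |A i j| * |x j|)) / |(A⁻¹ *ᵥ b) k|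
  have hG : Continuous G := by
    refine (continuous_finsetSum _ fun i _ => continuous_const.mul <| continuous_const.add <|
      continuous_finsetSum _ fun j _ => ?_).div_const _
    fun_prop
  have hGsol := ContinuousAt.comp (x := pairToFun A b) hG.continuousAt
    (continuousAt_inv_mulVec hA)
  refine (cwCond_le_ofReal_of_continuousAt hGsol ?_).trans (ENNReal.ofReal_le_ofReal ?_)
  · rintro y hy d - hyd -
    refine (abs_inv_mulVec_sub_le hA hy (fun i j => hyd (Sum.inl (i, j)))
      (fun i => hyd (Sum.inr i)) k).trans_eq ?_
    calc _ = G ((funToMat' y)⁻¹ *ᵥ funToVec y) * |(A⁻¹ *ᵥ b) k| * d :=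
          congrArg (· * d) (div_mul_cancel₀ _ (abs_ne_zero.2 hk)).symm
      _ = _ := mul_right_comm _ _ _
  · change G (A⁻¹ *ᵥ b) ≤ _
    simp only [G, Finset.mul_sum]
    gcongr with i
    calc |A⁻¹ k i| * (|b i| + ∑ j, |A i j| * |(A⁻¹ *ᵥ b) j|)
        ≤ |A⁻¹ k i| * (2 * ∑ j, |A i j| * |(A⁻¹ *ᵥ b) j|) := by
          gcongr
          linarith [abs_le_sum_abs_mul_abs_inv_mulVec b hA i]
      _ = ∑ j, 2 * (|A⁻¹ k i| * |A i j| * |(A⁻¹ *ᵥ b) j|) := by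
          simp only [Finset.mul_sum, mul_assoc, mul_left_comm]

section DetSensitivity

variable {ι : Type*} [Fintype ι] [DecidableEq ι]

/-- The relative sensitivity `|a i j * ∂(det A)/∂(a i j) / det A|` of the determinant to the entry
`a i j`, so that the componentwise condition number of `det` is the sum of these numbers. The
logarithmic derivative of `det` is `A⁻¹ j i`; the junk value at a singular matrix is `0`. -/
noncomputable def detSensitivity (A : Matrix ι ι ℝ) (i j : ι) : ℝ :=
  |A i j * A⁻¹ j i|

lemma detSensitivity_nonneg (A : Matrix ι ι ℝ) (i j : ι) : 0 ≤ detSensitivity A i j :=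
  abs_nonneg _

lemma detSensitivity_eq_zero {A : Matrix ι ι ℝ} {i j : ι} (h : A i j = 0) :
    detSensitivity A i j = 0 := by
  simp [detSensitivity, h]

variable {K : Type*} [Field K] {A : Matrix ι ι K} {b : ι → K} {k : ι}

lemma isUnit_det_updateCol (hA : IsUnit A.det) (hk : (A⁻¹ *ᵥ b) k ≠ 0) :
    IsUnit (A.updateCol k b).det := by
  rw [← cramer_apply, ← det_smul_inv_mulVec_eq_cramer A b hA]
  exact hA.mul hk.isUnit

lemma inv_eq_updateCol_one_mul_inv_updateCol (hA : IsUnit A.det) (hk : (A⁻¹ *ᵥ b) k ≠ 0) :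
    A⁻¹ = (1 : Matrix ι ι K).updateCol k (A⁻¹ *ᵥ b) * (A.updateCol k b)⁻¹ := by
  have hfac : A * (1 : Matrix ι ι K).updateCol k (A⁻¹ *ᵥ b) = A.updateCol k b := by
    rw [mul_updateCol, mul_one, mulVec_mulVec, mul_nonsing_inv _ hA, one_mulVec]
  refine inv_eq_right_inv ?_
  rw [← Matrix.mul_assoc, hfac, mul_nonsing_inv _ (isUnit_det_updateCol hA hk)]

lemma inv_apply_self_eq_mul_inv_updateCol (hA : IsUnit A.det) (hk : (A⁻¹ *ᵥ b) k ≠ 0) (i : ι) :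
    A⁻¹ k i = (A⁻¹ *ᵥ b) k * (A.updateCol k b)⁻¹ k i := by
  conv_lhs => rw [inv_eq_updateCol_one_mul_inv_updateCol hA hk]
  rw [mul_apply, Finset.sum_eq_single k]
  · rw [updateCol_self]
  · intro l _ hl
    rw [updateCol_ne hl, one_apply_ne hl.symm, zero_mul]
  · simp

lemma inv_apply_eq_add_mul_inv_updateCol (hA : IsUnit A.det) (hk : (A⁻¹ *ᵥ b) k ≠ 0) (i : ι)
    {j : ι} (hj : j ≠ k) :
    A⁻¹ j i = (A.updateCol k b)⁻¹ j i + (A⁻¹ *ᵥ b) j * (A.updateCol k b)⁻¹ k i := by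
  conv_lhs => rw [inv_eq_updateCol_one_mul_inv_updateCol hA hk]
  rw [mul_apply, Finset.sum_eq_add j k hj]
  · rw [updateCol_ne hj, one_apply_eq, one_mul, updateCol_self]
  · rintro l - ⟨hlj, hlk⟩
    rw [updateCol_ne hlk, one_apply_ne hlj.symm, zero_mul]
  · simp
  · simp

-- Eliminating `(A.updateCol k b)⁻¹ k i` between the two formulas for `A⁻¹` gives
-- `A⁻¹ k i * x j = x k * (A⁻¹ j i - (A.updateCol k b)⁻¹ j i)`, where `x = A⁻¹ *ᵥ b`.
lemma abs_inv_apply_mul_abs_mul_abs_inv_mulVec_le {A : Matrix ι ι ℝ} {b : ι → ℝ} {k : ι}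
    (hA : IsUnit A.det) (hk : (A⁻¹ *ᵥ b) k ≠ 0) (i : ι) {j : ι} (hj : j ≠ k) :
    |A⁻¹ k i| * |A i j| * |(A⁻¹ *ᵥ b) j| ≤
      (detSensitivity A i j + detSensitivity (A.updateCol k b) i j) * |(A⁻¹ *ᵥ b) k| := by
  have hdiff : A⁻¹ k i * A i j * (A⁻¹ *ᵥ b) j =
      (A i j * A⁻¹ j i - A i j * (A.updateCol k b)⁻¹ j i) * (A⁻¹ *ᵥ b) k := by
    rw [inv_apply_eq_add_mul_inv_updateCol hA hk i hj,
      inv_apply_self_eq_mul_inv_updateCol hA hk i]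
    ring
  rw [← abs_mul, ← abs_mul, hdiff, abs_mul]
  gcongr
  rw [detSensitivity, detSensitivity, updateCol_ne hj]
  exact abs_sub _ _

end DetSensitivity

lemma cLin_le_sum_detSensitivity {n : ℕ} {A : Matrix (Fin n) (Fin n) ℝ} {b : Fin n → ℝ}
    {k : Fin n} (hA : IsUnit A.det) (hk : (A⁻¹ *ᵥ b) k ≠ 0) :
    cLin k A b ≤ ENNReal.ofReal (2 * (∑ p : Fin n × Fin n, detSensitivity A p.1 p.2 +
      ∑ p : Fin n × Fin n with p.2 ≠ k, detSensitivity (A.updateCol k b) p.1 p.2)) := by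
  refine (cLin_le_two_mul_sum_div k hA hk).trans (ENNReal.ofReal_le_ofReal ?_)
  rw [div_le_iff₀ (abs_pos.2 hk), mul_assoc, ← Fintype.sum_prod_type', Finset.sum_filter,
    ← Finset.sum_add_distrib, Finset.sum_mul]
  refine mul_le_mul_of_nonneg_left (Finset.sum_le_sum fun p _ => ?_) zero_le_two
  split_ifs with hp
  · exact abs_inv_apply_mul_abs_mul_abs_inv_mulVec_le hA hk p.1 hp
  · rw [not_ne_iff.1 hp, add_zero, detSensitivity, abs_mul, mul_comm |A p.1 k|]

lemma exists_apply_ne_zero_of_isUnit_det {ι R : Type*} [Fintype ι] [DecidableEq ι] [CommRing R]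
    [Nontrivial R] {A : Matrix ι ι R} (hA : IsUnit A.det) (k : ι) : ∃ i, A i k ≠ 0 := by
  by_contra! h
  exact hA.ne_zero (det_eq_zero_of_column_eq_zero k h)

/-- The relative sensitivity to `a i j` of the denominator `det A` of Cramer's rule for the `k`-th
unknown if `j = k`, and of its numerator, which does not depend on column `k` of `A`, otherwise.
Every entry contributes `n` of these numbers, and together they control `c(A,b)`. -/
noncomputable def cramerSensitivity {ι : Type*} [Fintype ι] [DecidableEq ι] (A : Matrix ι ι ℝ)
    (b : ι → ℝ) (k i j : ι) : ℝ :=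
  detSensitivity (if j = k then A else A.updateCol k b) i j

-- The `- 2` comes from the column `k` of `S` being nonempty: the bound is `2 #S + 2 (#S - 1)`.
lemma cLinMax_le_of_cramerSensitivity_le {n : ℕ} {S : Finset (Fin n × Fin n)}
    {A : Matrix (Fin n) (Fin n) ℝ} {b : Fin n → ℝ} {s : ℝ} (hA : IsUnit A.det)
    (hAS : ∀ p ∉ S, A p.1 p.2 = 0) (hx : ∀ k, (A⁻¹ *ᵥ b) k ≠ 0)
    (hs : ∀ k, ∀ p ∈ S, cramerSensitivity A b k p.1 p.2 ≤ s) :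
    cLinMax A b ≤ ENNReal.ofReal ((4 * S.card - 2) * s) := by
  refine iSup_le fun k => (cLin_le_sum_detSensitivity hA (hx k)).trans
    (ENNReal.ofReal_le_ofReal ?_)
  obtain ⟨i, hi⟩ := exists_apply_ne_zero_of_isUnit_det hA k
  have hik : (i, k) ∈ S := by
    by_contra h
    exact hi (hAS _ h)
  have hden : ∀ p ∈ S, detSensitivity A p.1 p.2 ≤ s := fun p hp => by
    simpa only [cramerSensitivity, if_true] using hs p.2 p hp
  have hnum : ∀ p ∈ S.filter (·.2 ≠ k), detSensitivity (A.updateCol k b) p.1 p.2 ≤ s :=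
    fun p hp => by
      rw [Finset.mem_filter] at hp
      simpa only [cramerSensitivity, if_neg hp.2] using hs k p hp.1
  have hs0 : 0 ≤ s := (detSensitivity_nonneg A i k).trans (hden _ hik)
  have hcard : ((S.filter (·.2 ≠ k)).card : ℝ) + 1 ≤ S.card := by
    exact_mod_cast Finset.card_lt_card (Finset.filter_ssubset.2 ⟨(i, k), hik, not_not.2 rfl⟩)
  have hden_sum : ∑ p : Fin n × Fin n, detSensitivity A p.1 p.2 ≤ S.card * s := by
    rw [← Finset.sum_subset S.subset_univ fun p _ hp => detSensitivity_eq_zero (hAS p hp)]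
    simpa using Finset.sum_le_card_nsmul S _ s hden
  have hnum_sum : ∑ p : Fin n × Fin n with p.2 ≠ k, detSensitivity (A.updateCol k b) p.1 p.2 ≤
      (S.filter (·.2 ≠ k)).card * s := by
    rw [← Finset.sum_subset (Finset.filter_subset_filter _ S.subset_univ)]
    · simpa using Finset.sum_le_card_nsmul _ _ s hnum
    · intro p hp hpS
      have hpk : p.2 ≠ k := (Finset.mem_filter.1 hp).2
      refine detSensitivity_eq_zero ?_
      rw [updateCol_ne hpk, hAS p fun h => hpS (Finset.mem_filter.2 ⟨h, hpk⟩)]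
  nlinarith [mul_le_mul_of_nonneg_right hcard hs0]

section SetEntry

variable {ι R : Type*} [DecidableEq ι]

/-- The matrix `A` with its `(i, j)` entry replaced by `y`. -/
def setEntry (A : Matrix ι ι R) (i j : ι) (y : R) : Matrix ι ι R :=
  A.updateRow i (update (A i) j y)

lemma setEntry_apply (A : Matrix ι ι R) (i j : ι) (y : R) (k l : ι) :
    setEntry A i j y k l = if k = i ∧ l = j then y else A k l := by
  unfold setEntry
  by_cases hk : k = i
  · subst hk
    simp [update_apply]
  · simp [hk]

lemma updateCol_setEntry (A : Matrix ι ι R) (b : ι → R) (i : ι) {j k : ι} (hjk : j ≠ k) (y : R) :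
    (setEntry A i j y).updateCol k b = setEntry (A.updateCol k b) i j y := by
  ext a c
  simp only [setEntry_apply, updateCol_apply]
  grind

variable [Fintype ι]

lemma det_setEntry [CommRing R] (A : Matrix ι ι R) (i j : ι) (y : R) :
    (setEntry A i j y).det = A.det + (y - A i j) * A.adjugate j i := by
  have hrow : update (A i) j y = A i + (y - A i j) • Pi.single j 1 := by
    ext l
    obtain rfl | hl := eq_or_ne l j <;> simp [*]
  rw [setEntry, hrow, det_updateRow_add, det_updateRow_smul, updateRow_eq_self, adjugate_apply]

lemma adjugate_setEntry_apply [CommRing R] (A : Matrix ι ι R) (i j : ι) (y : R) :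
    (setEntry A i j y).adjugate j i = A.adjugate j i := by
  simp only [adjugate_apply, setEntry, updateRow_idem]

-- As a function of the entry `y`, the determinant is affine; `w` is its zero.
lemma exists_detSensitivity_setEntry_le (A : Matrix ι ι ℝ) (i j : ι) :
    ∃ w, ∀ y, detSensitivity (setEntry A i j y) i j ≤ |y / (y - w)| := by
  set C := A.adjugate j i with hC
  refine ⟨A i j - A.det / C, fun y => ?_⟩
  rw [detSensitivity, inv_def, Matrix.smul_apply, adjugate_setEntry_apply, det_setEntry,
    setEntry_apply, if_pos ⟨rfl, rfl⟩, Ring.inverse_eq_inv', ← hC, smul_eq_mul]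
  obtain hC0 | hC0 := eq_or_ne C 0
  · simp [hC0]
  · have hdet : A.det + (y - A i j) * C = (y - (A i j - A.det / C)) * C := by
      field_simp
      ring
    rw [hdet, mul_inv, inv_mul_cancel_right₀ hC0, ← div_eq_mul_inv]

lemma exists_cramerSensitivity_setEntry_le (A : Matrix ι ι ℝ) (b : ι → ℝ) (k i j : ι) :
    ∃ w, ∀ y, cramerSensitivity (setEntry A i j y) b k i j ≤ |y / (y - w)| := by
  obtain rfl | hjk := eq_or_ne j k
  · simpa only [cramerSensitivity, if_true] using exists_detSensitivity_setEntry_le A i j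
  · simpa only [cramerSensitivity, if_neg hjk, updateCol_setEntry _ _ _ hjk] using
      exists_detSensitivity_setEntry_le (A.updateCol k b) i j

end SetEntry

section MobiusTail

-- The set is contained in a ball around a point near `w`, on which `|y|` is of order `|w|`.
lemma setOf_lt_abs_div_sub_subset_ball {s : ℝ} (hs : 1 < s) (w : ℝ) :
    {y | s < |y / (y - w)|} ⊆
      Metric.ball (s ^ 2 * w / (s ^ 2 - 1)) (s * |w| / (s ^ 2 - 1)) := by
  intro y hy
  have hs2 : 0 < s ^ 2 - 1 := by nlinarith
  have hyw : 0 < |y - w| := abs_pos.2 fun h => by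
    norm_num [h] at hy
    linarith
  rw [Set.mem_ofPred_eq, abs_div, lt_div_iff₀ hyw] at hy
  have hsq : s ^ 2 * (y - w) ^ 2 < y ^ 2 := by
    simpa [mul_pow] using pow_lt_pow_left₀ hy (by positivity) two_ne_zero
  rw [Metric.mem_ball, Real.dist_eq]
  refine abs_lt_of_sq_lt_sq ?_ (by positivity)
  rw [sub_div' hs2.ne', div_pow, div_pow, mul_pow, sq_abs]
  gcongr
  nlinarith

lemma le_abs_of_mem_ball {s : ℝ} (hs : 1 < s) {w y : ℝ}
    (hy : y ∈ Metric.ball (s ^ 2 * w / (s ^ 2 - 1)) (s * |w| / (s ^ 2 - 1))) :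
    s * |w| / (s + 1) ≤ |y| := by
  have hs2 : 0 < s ^ 2 - 1 := by nlinarith
  have hcentre : |s ^ 2 * w / (s ^ 2 - 1)| = s ^ 2 * |w| / (s ^ 2 - 1) := by
    rw [abs_div, abs_mul, abs_of_pos hs2, abs_of_nonneg (sq_nonneg s)]
  have hrw : s * |w| / (s + 1) = s ^ 2 * |w| / (s ^ 2 - 1) - s * |w| / (s ^ 2 - 1) := by
    have : s + 1 ≠ 0 := by positivity
    field_simp
    ring
  rw [Metric.mem_ball', Real.dist_eq] at hy
  linarith [abs_sub_abs_le_abs_sub (s ^ 2 * w / (s ^ 2 - 1)) y]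

lemma withDensity_setOf_lt_abs_div_sub_le {f : ℝ → ℝ} {K s : ℝ} (hf : ∀ y, |y| * f y ≤ K)
    (hs : 1 < s) (w : ℝ) :
    volume.withDensity (fun y => ENNReal.ofReal (f y)) {y | s < |y / (y - w)|} ≤
      ENNReal.ofReal (2 * K / (s - 1)) := by
  have hK : 0 ≤ K := by simpa using hf 0
  obtain rfl | hw := eq_or_ne w 0
  · exact (measure_mono (setOf_lt_abs_div_sub_subset_ball hs 0)).trans (by simp)
  have hs1 : 0 < s - 1 := by linarith
  have hbound : ∀ y ∈ Metric.ball (s ^ 2 * w / (s ^ 2 - 1)) (s * |w| / (s ^ 2 - 1)),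
      f y ≤ K / (s * |w| / (s + 1)) := fun y hy => by
    have hy := le_abs_of_mem_ball hs hy
    have hpos : 0 < s * |w| / (s + 1) := by positivity
    calc f y ≤ K / |y| := (le_div_iff₀' (hpos.trans_le hy)).2 (hf y)
      _ ≤ K / (s * |w| / (s + 1)) := by gcongr
  calc volume.withDensity (fun y => ENNReal.ofReal (f y)) {y | s < |y / (y - w)|}
      ≤ volume.withDensity (fun y => ENNReal.ofReal (f y))
          (Metric.ball (s ^ 2 * w / (s ^ 2 - 1)) (s * |w| / (s ^ 2 - 1))) :=
        measure_mono (setOf_lt_abs_div_sub_subset_ball hs w)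
    _ = ∫⁻ y in Metric.ball (s ^ 2 * w / (s ^ 2 - 1)) (s * |w| / (s ^ 2 - 1)),
          ENNReal.ofReal (f y) := withDensity_apply _ measurableSet_ball
    _ ≤ ∫⁻ _ in Metric.ball (s ^ 2 * w / (s ^ 2 - 1)) (s * |w| / (s ^ 2 - 1)),
          ENNReal.ofReal (K / (s * |w| / (s + 1))) :=
        setLIntegral_mono' measurableSet_ball fun y hy => ENNReal.ofReal_le_ofReal (hbound y hy)
    _ = ENNReal.ofReal (2 * K / (s - 1)) := by
        rw [setLIntegral_const, Real.volume_ball, ← ENNReal.ofReal_mul (by positivity)]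
        have : s ^ 2 - 1 = (s + 1) * (s - 1) := by ring
        rw [this]
        congr 1
        field_simp

end MobiusTail

section Gaussian

lemma abs_mul_gaussianPDFReal_le (m : ℝ) {v : ℝ≥0} (hv : v ≠ 0) (y : ℝ) :
    |y| * gaussianPDFReal m v y ≤ (1 + |m| / √v) / √(2 * π) := by
  have hv0 : (0 : ℝ) < v := by positivity
  set u := |y - m| / √v with hu
  have hy : |y| ≤ (u + |m| / √v) * √v := by
    rw [← add_div, div_mul_cancel₀ _ (by positivity)]
    linarith [abs_sub_abs_le_abs_sub y m]
  have hexp : -(y - m) ^ 2 / (2 * v) = -(u ^ 2 / 2) := by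
    rw [hu, div_pow, sq_abs, Real.sq_sqrt hv0.le]
    field_simp
  have hpeak : u * rexp (-(u ^ 2 / 2)) ≤ 1 := by
    rw [Real.exp_neg, ← div_eq_mul_inv, div_le_one (Real.exp_pos _)]
    nlinarith [Real.add_one_le_exp (u ^ 2 / 2), sq_nonneg (u - 1)]
  have hexp_le : rexp (-(u ^ 2 / 2)) ≤ 1 := Real.exp_le_one_iff.2 (by linarith [sq_nonneg u])
  calc |y| * gaussianPDFReal m v y
      ≤ (u + |m| / √v) * √v * ((√(2 * π * v))⁻¹ * rexp (-(u ^ 2 / 2))) := by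
        rw [gaussianPDFReal, hexp]
        gcongr
    _ = (u * rexp (-(u ^ 2 / 2)) + |m| / √v * rexp (-(u ^ 2 / 2))) / √(2 * π) := by
        rw [Real.sqrt_mul (by positivity)]
        field_simp
    _ ≤ (1 + |m| / √v) / √(2 * π) := by
        gcongr
        exact mul_le_of_le_one_right (by positivity) hexp_le

lemma gaussianReal_setOf_lt_abs_div_sub_le (m : ℝ) {v : ℝ≥0} (hv : v ≠ 0) {s : ℝ} (hs : 1 < s)
    (w : ℝ) :
    gaussianReal m v {y | s < |y / (y - w)|} ≤
      ENNReal.ofReal (√(2 / π) * (1 + |m| / √v) / (s - 1)) := by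
  have hsqrt : √(2 / π) = 2 / √(2 * π) := by
    rw [Real.sqrt_div zero_le_two, Real.sqrt_mul zero_le_two, ← div_div, Real.div_sqrt]
  rw [gaussianReal_of_var_ne_zero _ hv]
  refine (withDensity_setOf_lt_abs_div_sub_le (abs_mul_gaussianPDFReal_le m hv) hs w).trans_eq ?_
  rw [hsqrt]
  congr 2
  ring

end Gaussian

section PiMeasure

variable {ι : Type*} [Fintype ι] {X : ι → Type*} [∀ i, MeasurableSpace (X i)]

lemma pi_absolutelyContinuous {μ ν : ∀ i, Measure (X i)} [∀ i, SigmaFinite (μ i)]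
    [∀ i, SigmaFinite (ν i)] (h : ∀ i, μ i ≪ ν i) : Measure.pi μ ≪ Measure.pi ν := by
  refine Fintype.induction_empty_option (P := fun ι _ => ∀ {X : ι → Type _}
    [∀ i, MeasurableSpace (X i)] {μ ν : ∀ i, Measure (X i)} [∀ i, SigmaFinite (μ i)]
    [∀ i, SigmaFinite (ν i)], (∀ i, μ i ≪ ν i) → Measure.pi μ ≪ Measure.pi ν) ?_ ?_ ?_ ι h
  · intro α β _ e ih X _ μ ν _ _ h
    let := Fintype.ofEquiv β e.symm
    rw [← (measurePreserving_piCongrLeft μ e).map_eq, ← (measurePreserving_piCongrLeft ν e).map_eq]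
    exact (ih fun i => h (e i)).map (MeasurableEquiv.measurable _)
  · intro X _ μ ν _ _ _
    rw [Measure.pi_of_empty, Measure.pi_of_empty]
  · intro α _ ih X _ μ ν _ _ h
    rw [← Measure.pi_map_piOptionEquivProd μ, ← Measure.pi_map_piOptionEquivProd ν]
    exact ((ih fun i => h (some i)).prod (h none)).map (MeasurableEquiv.measurable _)

lemma pi_le_of_forall_update_le [DecidableEq ι] {μ : ∀ i, Measure (X i)}
    [∀ i, IsProbabilityMeasure (μ i)] {E : Set (∀ i, X i)} (hE : MeasurableSet E) (i : ι)
    {c : ℝ≥0∞} (h : ∀ g, μ i {y | update g i y ∈ E} ≤ c) : Measure.pi μ E ≤ c := by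
  have hmarginal : ∫⁻ g, E.indicator 1 g ∂Measure.pi μ ≤ ∫⁻ _, c ∂Measure.pi μ := by
    refine lintegral_le_of_lmarginal_le {i} (measurable_one.indicator hE) measurable_const
      fun g => ?_
    rw [lmarginal_singleton, lmarginal_singleton, lintegral_const, measure_univ, mul_one]
    refine le_of_eq_of_le ?_ (h g)
    exact lintegral_indicator_one (measurable_update g hE)
  rwa [lintegral_indicator_one hE, lintegral_const, measure_univ, mul_one] at hmarginal

end PiMeasure

lemma prod_le_of_forall_slice_le {α β : Type*} [MeasurableSpace α] [MeasurableSpace β]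
    {μ : Measure α} [SFinite μ] {ν : Measure β} [IsProbabilityMeasure ν] {E : Set (α × β)}
    (hE : MeasurableSet E) {c : ℝ≥0∞} (h : ∀ b, μ ((fun a => (a, b)) ⁻¹' E) ≤ c) :
    μ.prod ν E ≤ c := by
  rw [Measure.prod_apply_symm hE]
  exact (lintegral_mono h).trans_eq (by simp)

section MatrixMeasurability

variable {ι Ω : Type*} [DecidableEq ι] [MeasurableSpace Ω] {M : Ω → Matrix ι ι ℝ}

lemma measurable_updateCol_apply {b : Ω → ι → ℝ} (hM : ∀ i j, Measurable fun ω => M ω i j)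
    (hb : ∀ i, Measurable fun ω => b ω i) (k i j : ι) :
    Measurable fun ω => (M ω).updateCol k (b ω) i j := by
  simp only [updateCol_apply]
  split_ifs
  · exact hb i
  · exact hM i j

variable [Fintype ι]

lemma measurable_det_of_entries (hM : ∀ i j, Measurable fun ω => M ω i j) :
    Measurable fun ω => (M ω).det := by
  simp only [det_apply']
  fun_prop

lemma measurable_inv_apply_of_entries (hM : ∀ i j, Measurable fun ω => M ω i j) (i j : ι) :
    Measurable fun ω => (M ω)⁻¹ i j := by
  have hadj : Measurable fun ω => (M ω).adjugate i j := by
    simp only [adjugate_apply]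
    refine measurable_det_of_entries fun k l => ?_
    obtain rfl | hk := eq_or_ne k j
    · simpa only [updateRow_self] using measurable_const
    · simpa only [updateRow_ne hk] using hM k l
  simp only [inv_def, Ring.inverse_eq_inv', Matrix.smul_apply, smul_eq_mul]
  exact (measurable_det_of_entries hM).inv.mul hadj

lemma measurable_detSensitivity (hM : ∀ i j, Measurable fun ω => M ω i j) (i j : ι) :
    Measurable fun ω => detSensitivity (M ω) i j :=
  ((hM i j).mul (measurable_inv_apply_of_entries hM j i)).abs

lemma measurable_cramerSensitivity {b : Ω → ι → ℝ} (hM : ∀ i j, Measurable fun ω => M ω i j)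
    (hb : ∀ i, Measurable fun ω => b ω i) (k i j : ι) :
    Measurable fun ω => cramerSensitivity (M ω) (b ω) k i j := by
  unfold cramerSensitivity
  split_ifs
  · exact measurable_detSensitivity hM i j
  · exact measurable_detSensitivity (measurable_updateCol_apply hM hb k) i j

end MatrixMeasurability

section GenericNonvanishing

variable {ι : Type*} [Fintype ι] [DecidableEq ι]

lemma finite_setOf_det_add_smul_eq_zero {R : Type*} [CommRing R] [IsDomain R]
    (A : Matrix ι ι R) {B : Matrix ι ι R} (hB : B.det ≠ 0) :
    {r : R | (A + r • B).det = 0}.Finite := by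
  let P : Polynomial R :=
    det ((Polynomial.X : Polynomial R) • B.map Polynomial.C + A.map Polynomial.C)
  have hP : P ≠ 0 := fun h => hB <| by
    rw [← Polynomial.coeff_det_X_add_C_card B A]
    exact congrArg (Polynomial.coeff · _) h
  refine (Polynomial.finite_setOfPred_isRoot hP).subset fun r hr => ?_
  rw [Set.mem_ofPred_eq, Polynomial.IsRoot, ← Polynomial.coe_evalRingHom, RingHom.map_det]
  convert hr.out using 2
  ext i j
  simp [add_comm, mul_comm r]

lemma ae_det_linearMap_ne_zero {κ : Type*} [Fintype κ] (L : (κ → ℝ) →ₗ[ℝ] Matrix ι ι ℝ)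
    {x₀ : κ → ℝ} (hx₀ : (L x₀).det ≠ 0) : ∀ᵐ x : κ → ℝ, (L x).det ≠ 0 := by
  have hentry (i j : ι) : Continuous fun x => L x i j :=
    (LinearMap.proj j ∘ₗ LinearMap.proj i ∘ₗ L : (κ → ℝ) →ₗ[ℝ] ℝ).continuous_of_finiteDimensional
  have hmeas : MeasurableSet {x | (L x).det ≠ 0} :=
    measurable_det_of_entries (fun i j => (hentry i j).measurable)
      (measurableSet_singleton 0).compl
  refine ae_mem_of_ae_add_linearMap_mem (LinearMap.toSpanSingleton ℝ (κ → ℝ) x₀) volume volume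
    hmeas fun y => ?_
  filter_upwards [(finite_setOf_det_add_smul_eq_zero (L y) hx₀).measure_zero volume |>
    compl_mem_ae_iff.2] with r hr
  change (L (y + r • x₀)).det ≠ 0
  rw [map_add, map_smul]
  exact hr

lemma ae_inv_mulVec_apply_ne_zero {A : Matrix ι ι ℝ} (hA : IsUnit A.det) (k : ι) :
    ∀ᵐ b : ι → ℝ, (A⁻¹ *ᵥ b) k ≠ 0 := by
  let φ : (ι → ℝ) →ₗ[ℝ] ℝ := LinearMap.proj k ∘ₗ A⁻¹.mulVecLin
  have hφ : LinearMap.ker φ ≠ ⊤ := fun h => by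
    have hcol : (A⁻¹ *ᵥ (A *ᵥ Pi.single k 1)) k = 0 :=
      LinearMap.mem_ker.1 (h ▸ Submodule.mem_top : A *ᵥ Pi.single k 1 ∈ LinearMap.ker φ)
    rw [mulVec_mulVec, nonsing_inv_mul _ hA, one_mulVec, Pi.single_eq_same] at hcol
    exact one_ne_zero hcol
  exact measure_mono_null (fun b hb => not_not.1 hb) (Measure.addHaar_submodule volume _ hφ)

end GenericNonvanishing

section SparseMatrix

variable {ι R : Type*} [DecidableEq ι] [Semiring R]

/-- Extension by zero of a family of entries indexed by `S`: the coordinates on `M_S` in which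
`N_S` is a product of Gaussians. -/
def sparseMatrix (S : Finset (ι × ι)) : (S → R) →ₗ[R] Matrix ι ι R where
  toFun g := of fun i j => if h : (i, j) ∈ S then g ⟨(i, j), h⟩ else 0
  map_add' g g' := by
    ext i j
    by_cases h : (i, j) ∈ S <;> simp [h]
  map_smul' r g := by
    ext i j
    by_cases h : (i, j) ∈ S <;> simp [h]

lemma sparseMatrix_apply {S : Finset (ι × ι)} (g : S → R) (i j : ι) :
    sparseMatrix S g i j = if h : (i, j) ∈ S then g ⟨(i, j), h⟩ else 0 :=
  rfl

lemma sparseMatrix_restrict {S : Finset (ι × ι)} {B : Matrix ι ι R}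
    (hB : ∀ i j, (i, j) ∉ S → B i j = 0) : sparseMatrix S (fun p => B p.1.1 p.1.2) = B := by
  ext i j
  rw [sparseMatrix_apply]
  split_ifs with h
  · rfl
  · exact (hB i j h).symm

lemma sparseMatrix_update {S : Finset (ι × ι)} (g : S → R) (p : S) (y : R) :
    sparseMatrix S (update g p y) = setEntry (sparseMatrix S g) p.1.1 p.1.2 y := by
  ext i j
  simp only [setEntry_apply, sparseMatrix_apply, update_apply]
  grind

end SparseMatrix

section SparseGaussian

variable {n : ℕ} {S : Finset (Fin n × Fin n)} {Abar : Matrix (Fin n) (Fin n) ℝ} {σ : ℝ}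

lemma measurable_matrix_apply (i j : Fin n) :
    Measurable fun A : Matrix (Fin n) (Fin n) ℝ => A i j :=
  (measurable_pi_apply j).comp (measurable_pi_apply (X := fun _ : Fin n => Fin n → ℝ) i)

lemma measurable_sparseMatrix :
    Measurable (sparseMatrix S : (S → ℝ) → Matrix (Fin n) (Fin n) ℝ) := by
  refine measurable_pi_lambda _ fun i => measurable_pi_lambda _ fun j => ?_
  simp only [sparseMatrix_apply]
  split_ifs
  · exact measurable_pi_apply _
  · exact measurable_const

lemma nnreal_mk_sq_eq_nnnorm_sq (σ : ℝ) : (⟨σ ^ 2, sq_nonneg σ⟩ : ℝ≥0) = ‖σ‖₊ ^ 2 :=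
  NNReal.eq (sq_abs σ).symm

lemma sparseGaussian_eq_map_sparseMatrix :
    sparseGaussian S Abar σ =
      (Measure.pi fun p : S => gaussianReal (Abar p.1.1 p.1.2) (‖σ‖₊ ^ 2)).map
        (sparseMatrix S) :=
  congrArg (fun v => (Measure.pi fun p : S => gaussianReal (Abar p.1.1 p.1.2) v).map
    (sparseMatrix S)) (nnreal_mk_sq_eq_nnnorm_sq σ)

instance : IsProbabilityMeasure (sparseGaussian S Abar σ) := by
  rw [sparseGaussian_eq_map_sparseMatrix]
  exact Measure.isProbabilityMeasure_map measurable_sparseMatrix.aemeasurable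

lemma pi_gaussianReal_absolutelyContinuous {ι : Type*} [Fintype ι] (m : ι → ℝ) {v : ℝ≥0}
    (hv : v ≠ 0) : Measure.pi (fun i => gaussianReal (m i) v) ≪ volume :=
  pi_absolutelyContinuous fun i => gaussianReal_absolutelyContinuous (m i) hv

lemma ae_isUnit_det_sparseGaussian (hS : Admissible S) (hσ : σ ≠ 0) :
    ∀ᵐ A ∂sparseGaussian S Abar σ, IsUnit A.det := by
  obtain ⟨B, hBS, hB⟩ := hS
  have hdet : (sparseMatrix S fun p => B p.1.1 p.1.2).det ≠ 0 := by
    rw [sparseMatrix_restrict hBS]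
    exact hB.ne_zero
  rw [sparseGaussian_eq_map_sparseMatrix, ae_map_iff measurable_sparseMatrix.aemeasurable]
  · filter_upwards [(pi_gaussianReal_absolutelyContinuous _ (by simpa using hσ)).ae_le
      (ae_det_linearMap_ne_zero _ hdet)] with g hg
    exact hg.isUnit
  · simp only [isUnit_iff_ne_zero]
    exact measurable_det_of_entries measurable_matrix_apply (measurableSet_singleton 0).compl

lemma ae_apply_eq_zero_sparseGaussian :
    ∀ᵐ A ∂sparseGaussian S Abar σ, ∀ p ∉ S, A p.1 p.2 = 0 := by
  rw [ae_all_iff]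
  intro p
  rw [sparseGaussian_eq_map_sparseMatrix, ae_map_iff measurable_sparseMatrix.aemeasurable]
  · refine Filter.Eventually.of_forall fun g hp => ?_
    rw [sparseMatrix_apply, dif_neg hp]
  · exact (MeasurableSet.const _).imp
      (measurable_matrix_apply p.1 p.2 (measurableSet_singleton 0))

lemma ae_inv_mulVec_apply_ne_zero_prod (hS : Admissible S) (hσ : σ ≠ 0) {ν : Measure (Fin n → ℝ)}
    [SFinite ν] (hν : ν ≪ volume) :
    ∀ᵐ q ∂(sparseGaussian S Abar σ).prod ν, ∀ k, (q.1⁻¹ *ᵥ q.2) k ≠ 0 := by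
  have hmeas (k : Fin n) : Measurable
      fun q : Matrix (Fin n) (Fin n) ℝ × (Fin n → ℝ) => (q.1⁻¹ *ᵥ q.2) k := by
    simp only [mulVec, dotProduct]
    refine Finset.measurable_sum _ fun i _ => Measurable.mul ?_ (by fun_prop)
    exact measurable_inv_apply_of_entries
      (fun i j => (measurable_matrix_apply i j).comp measurable_fst) k i
  refine ae_all_iff.2 fun k => (Measure.ae_prod_iff_ae_ae ?_).2 ?_
  · exact (hmeas k) (measurableSet_singleton 0).compl
  · filter_upwards [ae_isUnit_det_sparseGaussian hS hσ] with A hA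
    exact hν.ae_le (ae_inv_mulVec_apply_ne_zero hA k)

lemma sparseGaussian_setOf_lt_cramerSensitivity_le (hσ : 0 < σ) {p : Fin n × Fin n} (hp : p ∈ S)
    (hmax : |Abar p.1 p.2| ≤ 1) (b : Fin n → ℝ) (k : Fin n) {s : ℝ} (hs : 1 < s) :
    sparseGaussian S Abar σ {A | s < cramerSensitivity A b k p.1 p.2} ≤
      ENNReal.ofReal ((1 + σ) / σ * √(2 / π) / (s - 1)) := by
  have hE : MeasurableSet {A | s < cramerSensitivity A b k p.1 p.2} :=
    measurableSet_lt measurable_const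
      (measurable_cramerSensitivity (M := fun A => A) (b := fun _ => b) measurable_matrix_apply
        (fun _ => measurable_const) k p.1 p.2)
  rw [sparseGaussian_eq_map_sparseMatrix, Measure.map_apply measurable_sparseMatrix hE]
  refine pi_le_of_forall_update_le (measurable_sparseMatrix hE) ⟨p, hp⟩ fun g => ?_
  obtain ⟨w, hw⟩ := exists_cramerSensitivity_setEntry_le (sparseMatrix S g) b k p.1 p.2
  calc gaussianReal (Abar p.1 p.2) (‖σ‖₊ ^ 2)
        {y | s < cramerSensitivity (sparseMatrix S (update g ⟨p, hp⟩ y)) b k p.1 p.2}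
      ≤ gaussianReal (Abar p.1 p.2) (‖σ‖₊ ^ 2) {y | s < |y / (y - w)|} := by
        simp only [sparseMatrix_update]
        exact measure_mono fun y hy => hy.out.trans_le (hw y)
    _ ≤ ENNReal.ofReal (√(2 / π) * (1 + |Abar p.1 p.2| / √(‖σ‖₊ ^ 2 : ℝ≥0)) / (s - 1)) :=
        gaussianReal_setOf_lt_abs_div_sub_le _ (by simpa using hσ.ne') hs w
    _ ≤ ENNReal.ofReal (√(2 / π) * (1 + 1 / σ) / (s - 1)) := by
        rw [NNReal.coe_pow, coe_nnnorm, Real.norm_of_nonneg hσ.le, Real.sqrt_sq hσ.le]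
        gcongr
    _ = ENNReal.ofReal ((1 + σ) / σ * √(2 / π) / (s - 1)) := by
        congr 2
        field_simp
        ring

lemma prod_setOf_lt_cramerSensitivity_le (hσ : 0 < σ) {p : Fin n × Fin n} (hp : p ∈ S)
    (hmax : |Abar p.1 p.2| ≤ 1) (ν : Measure (Fin n → ℝ)) [IsProbabilityMeasure ν] (k : Fin n)
    {s : ℝ} (hs : 1 < s) :
    (sparseGaussian S Abar σ).prod ν {q | s < cramerSensitivity q.1 q.2 k p.1 p.2} ≤
      ENNReal.ofReal ((1 + σ) / σ * √(2 / π) / (s - 1)) := by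
  refine prod_le_of_forall_slice_le ?_ fun b =>
    sparseGaussian_setOf_lt_cramerSensitivity_le hσ hp hmax b k hs
  exact measurableSet_lt measurable_const (measurable_cramerSensitivity
    (fun i j => (measurable_matrix_apply i j).comp measurable_fst) (by fun_prop) k p.1 p.2)

lemma prod_setOf_lt_cLinMax_le (hS : Admissible S) (hmax : ∀ p ∈ S, |Abar p.1 p.2| ≤ 1)
    (hσ : 0 < σ) {ν : Measure (Fin n → ℝ)} [IsProbabilityMeasure ν] (hν : ν ≪ volume) {s : ℝ}
    (hs : 1 < s) :
    (sparseGaussian S Abar σ).prod ν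
        {q | ENNReal.ofReal ((4 * S.card - 2) * s) < cLinMax q.1 q.2} ≤
      n * S.card * ENNReal.ofReal ((1 + σ) / σ * √(2 / π) / (s - 1)) := by
  have hsub : ∀ᵐ q ∂(sparseGaussian S Abar σ).prod ν,
      ENNReal.ofReal ((4 * S.card - 2) * s) < cLinMax q.1 q.2 →
        q ∈ ⋃ k, ⋃ p ∈ S, {q | s < cramerSensitivity q.1 q.2 k p.1 p.2} := by
    filter_upwards [Measure.quasiMeasurePreserving_fst.ae (ae_isUnit_det_sparseGaussian hS hσ.ne'),
      Measure.quasiMeasurePreserving_fst.ae ae_apply_eq_zero_sparseGaussian,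
      ae_inv_mulVec_apply_ne_zero_prod hS hσ.ne' hν] with q hdet hsupp hx hq
    simp only [Set.mem_iUnion, Set.mem_ofPred_eq, exists_prop]
    by_contra! hall
    exact hq.not_ge (cLinMax_le_of_cramerSensitivity_le hdet hsupp hx hall)
  calc _ ≤ (sparseGaussian S Abar σ).prod ν
          (⋃ k, ⋃ p ∈ S, {q | s < cramerSensitivity q.1 q.2 k p.1 p.2}) := measure_mono_ae hsub
    _ ≤ ∑ k, ∑ p ∈ S, (sparseGaussian S Abar σ).prod ν
          {q | s < cramerSensitivity q.1 q.2 k p.1 p.2} :=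
        (measure_iUnion_fintype_le _ _).trans
          (Finset.sum_le_sum fun k _ => measure_biUnion_finset_le S _)
    _ ≤ ∑ _k : Fin n, ∑ _p ∈ S, ENNReal.ofReal ((1 + σ) / σ * √(2 / π) / (s - 1)) := by
        gcongr with k _ p hp
        exact prod_setOf_lt_cramerSensitivity_le hσ hp (hmax p hp) ν k hs
    _ = n * S.card * ENNReal.ofReal ((1 + σ) / σ * √(2 / π) / (s - 1)) := by
        simp [mul_assoc]

end SparseGaussian

lemma one_half_le_mul_sqrt_two_div_pi {σ : ℝ} (hσ : 0 < σ) :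
    1 / 2 ≤ (1 + σ) / σ * √(2 / π) := by
  have hsqrt : 1 / 2 ≤ √(2 / π) := by
    rw [Real.le_sqrt (by norm_num) (by positivity), le_div_iff₀ Real.pi_pos]
    linarith [Real.pi_le_four]
  have hfrac : 1 ≤ (1 + σ) / σ := (one_le_div hσ).2 (by linarith)
  nlinarith

-- For `m ≥ 1` take `s = t / (4 * m - 2)`; the last bound then amounts to `4 * m ^ 2 - 2 * m ≤ t`.
lemma exists_one_lt_mul_le_mul_div_le {n m : ℕ} {K t : ℝ} (hmn : m ≤ n ^ 2) (hK : 1 / 2 ≤ K)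
    (ht : 2 * (m : ℝ) < t) (hlt : K * (4 * n * m ^ 2 / (t - 2 * m)) < 1) :
    ∃ s, 1 < s ∧ (4 * m - 2) * s ≤ t ∧
      n * m * (K / (s - 1)) ≤ K * (4 * n * m ^ 2 / (t - 2 * m)) := by
  obtain rfl | hm := Nat.eq_zero_or_pos m
  · exact ⟨2, one_lt_two, by norm_num at ht ⊢; linarith, by simp⟩
  have hn : 1 ≤ n := Nat.pos_of_ne_zero fun h => by simp [h] at hmn; omega
  have hm1 : (1 : ℝ) ≤ m := by exact_mod_cast hm
  have hn1 : (1 : ℝ) ≤ n := by exact_mod_cast hn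
  have htm : 0 < t - 2 * m := by linarith
  have hlarge : 2 * n * m ^ 2 + 2 * m < t := by
    rw [mul_div_assoc', div_lt_one htm] at hlt
    have : 1 / 2 * (4 * n * (m : ℝ) ^ 2) ≤ K * (4 * n * m ^ 2) := by gcongr
    linarith
  have hquad : 4 * (m : ℝ) ^ 2 - 2 * m ≤ t := by
    obtain rfl | hn2 := hn.eq_or_lt
    · have : m = 1 := by omega
      subst this
      norm_num at hlarge ⊢
      linarith
    · have : (2 : ℝ) ≤ n := by exact_mod_cast hn2
      nlinarith [sq_nonneg (m : ℝ)]
  have h4m : (0 : ℝ) < 4 * m - 2 := by linarith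
  have hgap : 0 < t - (4 * m - 2) := by nlinarith
  refine ⟨t / (4 * m - 2), (one_lt_div h4m).2 (by linarith), (mul_div_cancel₀ t h4m.ne').le, ?_⟩
  have hratio : (4 * m - 2) / (t - (4 * m - 2)) ≤ 4 * m / (t - 2 * m) := by
    rw [div_le_div_iff₀ hgap htm]
    nlinarith
  calc n * m * (K / (t / (4 * m - 2) - 1))
      = n * m * K * ((4 * m - 2) / (t - (4 * m - 2))) := by
        rw [div_sub_one h4m.ne', div_div_eq_mul_div]
        ring
    _ ≤ n * m * K * (4 * m / (t - 2 * m)) := by gcongr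
    _ = K * (4 * n * m ^ 2 / (t - 2 * m)) := by ring

theorem prob_cLinMax_gt_general {n : ℕ} (S : Finset (Fin n × Fin n)) (hS : Admissible S)
    (Abar : Matrix (Fin n) (Fin n) ℝ) (hmax : ∀ p ∈ S, |Abar p.1 p.2| ≤ 1) (σ : ℝ) (hσ : 0 < σ)
    (ν : Measure (Fin n → ℝ)) [IsProbabilityMeasure ν] (hν : ν ≪ volume) (t : ℝ)
    (ht : 2 * (S.card : ℝ) < t) :
    (sparseGaussian S Abar σ).prod ν {p | ENNReal.ofReal t < cLinMax p.1 p.2}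
      ≤ ENNReal.ofReal ((1 + σ) / σ
          * (4 * (n : ℝ) * (S.card : ℝ) ^ 2 / (t - 2 * S.card))
          * √(2 / π)) := by
  rw [mul_right_comm]
  obtain hge | hlt := le_or_gt 1
    ((1 + σ) / σ * √(2 / π) * (4 * n * (S.card : ℝ) ^ 2 / (t - 2 * S.card)))
  · exact prob_le_one.trans (ENNReal.one_le_ofReal.2 hge)
  have hcard : S.card ≤ n ^ 2 := by simpa [sq] using S.card_le_univ
  obtain ⟨s, hs, hst, hbound⟩ :=
    exists_one_lt_mul_le_mul_div_le hcard (one_half_le_mul_sqrt_two_div_pi hσ) ht hlt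
  calc (sparseGaussian S Abar σ).prod ν {p | ENNReal.ofReal t < cLinMax p.1 p.2}
      ≤ (sparseGaussian S Abar σ).prod ν
          {p | ENNReal.ofReal ((4 * S.card - 2) * s) < cLinMax p.1 p.2} :=
        measure_mono fun p hp => (ENNReal.ofReal_le_ofReal hst).trans_lt hp
    _ ≤ n * S.card * ENNReal.ofReal ((1 + σ) / σ * √(2 / π) / (s - 1)) :=
        prod_setOf_lt_cLinMax_le hS hmax hσ hν hs
    _ = ENNReal.ofReal (n * S.card * ((1 + σ) / σ * √(2 / π) / (s - 1))) := by
        rw [ENNReal.ofReal_mul (by positivity), ENNReal.ofReal_mul (by positivity),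
          ENNReal.ofReal_natCast, ENNReal.ofReal_natCast]
    _ ≤ _ := ENNReal.ofReal_le_ofReal hbound

lemma vecGaussian_eq_pi {n : ℕ} (bbar : Fin n → ℝ) (σ : ℝ) :
    vecGaussian bbar σ = Measure.pi fun i => gaussianReal (bbar i) (‖σ‖₊ ^ 2) :=
  congrArg (fun v => Measure.pi fun i => gaussianReal (bbar i) v) (nnreal_mk_sq_eq_nnnorm_sq σ)

instance {n : ℕ} (bbar : Fin n → ℝ) (σ : ℝ) : IsProbabilityMeasure (vecGaussian bbar σ) := by
  rw [vecGaussian_eq_pi]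
  infer_instance

lemma vecGaussian_absolutelyContinuous {n : ℕ} (bbar : Fin n → ℝ) {σ : ℝ} (hσ : σ ≠ 0) :
    vecGaussian bbar σ ≪ volume := by
  rw [vecGaussian_eq_pi]
  exact pi_gaussianReal_absolutelyContinuous bbar (by simpa using hσ)

/-- Let `S ⊆ [n]²` be admissible, `Ā ∈ M_S`, `b̄ ∈ ℝⁿ` with
`‖Ā‖_max ≤ 1`, `‖b̄‖_∞ ≤ 1`, `σ > 0`, `A ~ N_S(Ā, σ²Id)` and `b ~ N(b̄, σ²Id)`
independent. For every real `t > 2|S|`,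
`Prob{c(A,b) > t} ≤ ((1+σ)/σ)·(4n|S|²/(t−2|S|))·√(2/π)`,
where `c(A,b) = max_k c_k(A,b)`. -/
theorem prob_cLinMax_gt {n : ℕ} (S : Finset (Fin n × Fin n)) (hS : Admissible S)
    (Abar : Matrix (Fin n) (Fin n) ℝ) (hsupp : ∀ i j, (i, j) ∉ S → Abar i j = 0)
    (hmax : ∀ i j, |Abar i j| ≤ 1) (bbar : Fin n → ℝ) (hbmax : ∀ i, |bbar i| ≤ 1)
    (σ : ℝ) (hσ : 0 < σ) (t : ℝ) (ht : 2 * (S.card : ℝ) < t) :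
    (sparseGaussian S Abar σ).prod (vecGaussian bbar σ)
        {p | ENNReal.ofReal t < cLinMax p.1 p.2}
      ≤ ENNReal.ofReal ((1 + σ) / σ
          * (4 * (n : ℝ) * (S.card : ℝ) ^ 2 / (t - 2 * S.card))
          * Real.sqrt (2 / Real.pi)) :=
  prob_cLinMax_gt_general S hS Abar (fun p _ => hmax p.1 p.2) σ hσ _
    (vecGaussian_absolutelyContinuous bbar hσ.ne') t ht
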